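/- A valid schedule certified by a matching valid interval assignment is 4-approximate: let the machine types satisfy c_k = 2^k, strictly increasing capacities B_k ∈ ℤ≥1, and 2^k/B_k ≥ 2^{k+1}/B_{k+1} for all k. Let 𝒳 be a valid schedule of a finite instance J such that there exists a family {(I_X, t(X), S_X)}_{X∈𝒳}, with one tuple per batch X of 𝒳 whose type component equals the type t(X) of that batch, forming a valid interval assignment for J. Then cost(𝒳) ≤ 4·OPT(J). -/

import Mathlib

structure SchedInstance where
  jobs : Finset ℕ
  r : ℕ → ℤ
  d : ℕ → ℤ
  window : ∀ j ∈ jobs, r j ≤ d j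

structure Batch where
  btype : ℕ
  time : ℤ
  bjobs : Finset ℕ
deriving DecidableEq

def ValidSchedule (B : ℕ → ℕ) (P : SchedInstance) (S : Finset Batch) : Prop :=
  (∀ X ∈ S, X.bjobs.card ≤ B X.btype) ∧
  (∀ X ∈ S, ∀ j ∈ X.bjobs, j ∈ P.jobs ∧ P.r j ≤ X.time ∧ X.time ≤ P.d j) ∧
  (∀ X ∈ S, ∀ Y ∈ S, X ≠ Y → Disjoint X.bjobs Y.bjobs) ∧
  (∀ j ∈ P.jobs, ∃ X ∈ S, j ∈ X.bjobs)

noncomputable def schedCost (c : ℕ → ℝ) (S : Finset Batch) : ℝ :=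
  ∑ X ∈ S, c X.btype

noncomputable def OPT (c : ℕ → ℝ) (B : ℕ → ℕ) (P : SchedInstance) : ℝ :=
  sInf {x : ℝ | ∃ S : Finset Batch, ValidSchedule B P S ∧ schedCost c S = x}

structure IAItem where
  lo : ℤ
  hi : ℤ
  itype : ℕ
  ijobs : Finset ℕ
deriving DecidableEq

def ValidAssignment (B : ℕ → ℕ) (P : SchedInstance) (A : Finset IAItem) : Prop :=
  (∀ e ∈ A, if e.itype = 0 then e.ijobs.card = 1 else e.ijobs.card = B (e.itype - 1)) ∧
  (∀ e ∈ A, ∀ j ∈ e.ijobs, j ∈ P.jobs ∧ e.lo ≤ P.r j ∧ P.d j ≤ e.hi) ∧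
  (∀ e ∈ A, ∀ e' ∈ A, e ≠ e' → e.itype = e'.itype →
      Set.Icc e.lo e.hi ∩ Set.Icc e'.lo e'.hi = ∅) ∧
  (∀ e ∈ A, ∀ e' ∈ A, e ≠ e' → Disjoint e.ijobs e'.ijobs)

/-- The number of jobs in a tuple of type `t` of a valid interval assignment. -/
def tupleSize (B : ℕ → ℕ) (t : ℕ) : ℕ := if t = 0 then 1 else B (t - 1)

/-- The cost of a machine of type `t`, spread evenly over the jobs of a tuple of type `t`. -/
noncomputable def tupleWeight (B : ℕ → ℕ) (t : ℕ) : ℝ := (2 : ℝ) ^ t / (tupleSize B t : ℝ)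

lemma tupleSize_pos {B : ℕ → ℕ} (hB1 : ∀ k, 1 ≤ B k) (t : ℕ) : 0 < tupleSize B t := by
  unfold tupleSize
  split_ifs
  · exact one_pos
  · exact hB1 _

lemma tupleWeight_nonneg (B : ℕ → ℕ) (t : ℕ) : 0 ≤ tupleWeight B t := by
  unfold tupleWeight
  positivity

lemma tupleSize_mul_tupleWeight {B : ℕ → ℕ} (hB1 : ∀ k, 1 ≤ B k) (t : ℕ) :
    (tupleSize B t : ℝ) * tupleWeight B t = 2 ^ t := by
  have h : (tupleSize B t : ℝ) ≠ 0 := by exact_mod_cast (tupleSize_pos hB1 t).ne'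
  unfold tupleWeight
  field_simp

lemma tupleWeight_le_of_lt {B : ℕ → ℕ}
    (hcpj : ∀ k, (2 : ℝ) ^ (k + 1) / (B (k + 1) : ℝ) ≤ (2 : ℝ) ^ k / (B k : ℝ))
    {k t : ℕ} (hkt : k < t) : tupleWeight B t ≤ 2 * ((2 : ℝ) ^ k / (B k : ℝ)) := by
  obtain ⟨s, rfl⟩ : ∃ s, t = s + 1 := ⟨t - 1, by omega⟩
  have hanti : Antitone fun k => (2 : ℝ) ^ k / (B k : ℝ) := antitone_nat_of_succ_le hcpj
  have h : (2 : ℝ) ^ s / (B s : ℝ) ≤ 2 ^ k / (B k : ℝ) := hanti (Nat.lt_succ_iff.mp hkt)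
  have hw : tupleWeight B (s + 1) = 2 * ((2 : ℝ) ^ s / (B s : ℝ)) := by
    simp [tupleWeight, tupleSize, pow_succ]
    ring
  rw [hw]
  linarith

/-- Tuples of type at most `k` charge at most `2 ^ (k + 1)` to a job set `T` meeting at most one
tuple of each type. -/
lemma sum_charge_low_le {ι : Type*} {B : ℕ → ℕ} (hB1 : ∀ k, 1 ≤ B k) (A : Finset ι)
    (ty : ι → ℕ) (sj : ι → Finset ℕ) (hcard : ∀ X ∈ A, (sj X).card = tupleSize B (ty X))
    (T : Finset ℕ)
    (hone : ∀ X ∈ A, ∀ X' ∈ A, (sj X ∩ T).Nonempty → (sj X' ∩ T).Nonempty →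
      ty X = ty X' → X = X')
    (k : ℕ) :
    ∑ X ∈ A with ty X ≤ k, ((sj X ∩ T).card : ℝ) * tupleWeight B (ty X) ≤ 2 ^ (k + 1) := by
  classical
  set L := A.filter fun X => ty X ≤ k with hL
  have hinj : Set.InjOn ty ↑(L.filter fun X => (sj X ∩ T).Nonempty) := by
    intro X hX X' hX' h
    simp only [hL, Finset.coe_filter, Finset.mem_filter, Set.mem_ofPred_eq] at hX hX'
    exact hone X hX.1.1 X' hX'.1.1 hX.2 hX'.2 h
  calc ∑ X ∈ L, ((sj X ∩ T).card : ℝ) * tupleWeight B (ty X)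
      ≤ ∑ X ∈ L, if (sj X ∩ T).Nonempty then (2 : ℝ) ^ ty X else 0 := by
        refine Finset.sum_le_sum fun X hX => ?_
        split_ifs with h
        · rw [← tupleSize_mul_tupleWeight hB1, ← hcard X (Finset.mem_filter.mp hX).1]
          exact mul_le_mul_of_nonneg_right
            (by exact_mod_cast Finset.card_le_card Finset.inter_subset_left)
            (tupleWeight_nonneg _ _)
        · simp [Finset.not_nonempty_iff_eq_empty.mp h]
    _ = ∑ t ∈ (L.filter fun X => (sj X ∩ T).Nonempty).image ty, (2 : ℝ) ^ t := by
        rw [← Finset.sum_filter, Finset.sum_image hinj]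
    _ ≤ ∑ t ∈ Finset.range (k + 1), (2 : ℝ) ^ t := by
        refine Finset.sum_le_sum_of_subset_of_nonneg (fun t ht => ?_) fun _ _ _ => by positivity
        obtain ⟨X, hX, rfl⟩ := Finset.mem_image.mp ht
        simp only [hL, Finset.mem_filter] at hX
        exact Finset.mem_range.mpr (by omega)
    _ ≤ 2 ^ (k + 1) := by
        rw [geom_sum_eq (by norm_num)]
        norm_num

/-- Pairwise disjoint tuples of type greater than `k` charge at most `2 ^ (k + 1)` to a job set
that fits on a machine of type `k`. -/
lemma sum_charge_high_le {ι : Type*} {B : ℕ → ℕ} (hB1 : ∀ k, 1 ≤ B k)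
    (hcpj : ∀ k, (2 : ℝ) ^ (k + 1) / (B (k + 1) : ℝ) ≤ (2 : ℝ) ^ k / (B k : ℝ))
    (A : Finset ι) (ty : ι → ℕ) (sj : ι → Finset ℕ)
    (hdisj : ∀ X ∈ A, ∀ X' ∈ A, X ≠ X' → Disjoint (sj X) (sj X'))
    (T : Finset ℕ) (k : ℕ) (hT : T.card ≤ B k) :
    ∑ X ∈ A with ¬ ty X ≤ k, ((sj X ∩ T).card : ℝ) * tupleWeight B (ty X) ≤ 2 ^ (k + 1) := by
  classical
  set H := A.filter fun X => ¬ ty X ≤ k with hH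
  have hB : (0 : ℝ) < B k := by exact_mod_cast hB1 k
  have hcardH : ∑ X ∈ H, (sj X ∩ T).card ≤ B k := by
    rw [← Finset.card_biUnion]
    · refine (Finset.card_le_card ?_).trans hT
      exact Finset.biUnion_subset.mpr fun _ _ => Finset.inter_subset_right
    · intro X hX X' hX' h
      exact (hdisj X (Finset.mem_filter.mp hX).1 X' (Finset.mem_filter.mp hX').1 h).mono
        Finset.inter_subset_left Finset.inter_subset_left
  calc ∑ X ∈ H, ((sj X ∩ T).card : ℝ) * tupleWeight B (ty X)
      ≤ ∑ X ∈ H, ((sj X ∩ T).card : ℝ) * (2 * ((2 : ℝ) ^ k / (B k : ℝ))) := by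
        refine Finset.sum_le_sum fun X hX => mul_le_mul_of_nonneg_left ?_ (Nat.cast_nonneg _)
        exact tupleWeight_le_of_lt hcpj (not_le.mp (Finset.mem_filter.mp hX).2)
    _ = ((∑ X ∈ H, (sj X ∩ T).card : ℕ) : ℝ) * (2 * ((2 : ℝ) ^ k / (B k : ℝ))) := by
        rw [← Finset.sum_mul, Nat.cast_sum]
    _ ≤ (B k : ℝ) * (2 * ((2 : ℝ) ^ k / (B k : ℝ))) :=
        mul_le_mul_of_nonneg_right (by exact_mod_cast hcardH) (by positivity)
    _ = 2 ^ (k + 1) := by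
        field_simp
        ring

/-- a valid schedule `𝒳` certified by a matching valid interval
assignment — one tuple per batch, the tuple's type equal to the batch's type — is
4-approximate: `cost 𝒳 ≤ 4 · OPT`. -/
theorem certified_schedule_four_approx
    (B : ℕ → ℕ) (hB1 : ∀ k, 1 ≤ B k) (hBmono : StrictMono B)
    (hcpj : ∀ k, (2 : ℝ) ^ (k + 1) / (B (k + 1) : ℝ) ≤ (2 : ℝ) ^ k / (B k : ℝ))
    (P : SchedInstance) (𝒳 : Finset Batch) (h𝒳 : ValidSchedule B P 𝒳)
    (lo hi : Batch → ℤ) (sj : Batch → Finset ℕ)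
    (hinj : Set.InjOn (fun Y => IAItem.mk (lo Y) (hi Y) Y.btype (sj Y)) ↑𝒳)
    (hval : ValidAssignment B P
      (𝒳.image fun Y => IAItem.mk (lo Y) (hi Y) Y.btype (sj Y))) :
    schedCost (fun k => (2 : ℝ) ^ k) 𝒳 ≤ 4 * OPT (fun k => (2 : ℝ) ^ k) B P := by
  obtain ⟨hcard, hwin, hdisjI, hdisjJ⟩ := hval
  simp only [Finset.forall_mem_image] at hcard hwin hdisjI hdisjJ
  have hcard' : ∀ X ∈ 𝒳, (sj X).card = tupleSize B X.btype := by
    intro X hX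
    have h := hcard hX
    unfold tupleSize
    split_ifs at h ⊢ <;> exact h
  have hdisj : ∀ X ∈ 𝒳, ∀ X' ∈ 𝒳, X ≠ X' → Disjoint (sj X) (sj X') :=
    fun X hX X' hX' hne => hdisjJ hX hX' fun h => hne (hinj hX hX' h)
  have hopt : schedCost (fun k => (2 : ℝ) ^ k) 𝒳 / 4 ≤ OPT (fun k => (2 : ℝ) ^ k) B P := by
    refine le_csInf ⟨_, 𝒳, h𝒳, rfl⟩ ?_
    rintro _ ⟨S, ⟨hcap, hfeas, -, hcover⟩, rfl⟩
    rw [div_le_iff₀ (by norm_num)]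
    have hone : ∀ Y ∈ S, ∀ X ∈ 𝒳, ∀ X' ∈ 𝒳, (sj X ∩ Y.bjobs).Nonempty →
        (sj X' ∩ Y.bjobs).Nonempty → X.btype = X'.btype → X = X' := by
      rintro Y hY X hX X' hX' ⟨j, hj⟩ ⟨j', hj'⟩ hty
      by_contra hne
      have hempty := hdisjI hX hX' (fun h => hne (hinj hX hX' h)) hty
      rw [Finset.mem_inter] at hj hj'
      obtain ⟨-, hlo, hhi⟩ := hwin hX j hj.1
      obtain ⟨-, hlo', hhi'⟩ := hwin hX' j' hj'.1
      obtain ⟨-, hr, hd⟩ := hfeas Y hY j hj.2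
      obtain ⟨-, hr', hd'⟩ := hfeas Y hY j' hj'.2
      exact (hempty ▸ (⟨⟨hlo.trans hr, hd.trans hhi⟩, ⟨hlo'.trans hr', hd'.trans hhi'⟩⟩ :
        Y.time ∈ Set.Icc (lo X) (hi X) ∩ Set.Icc (lo X') (hi X')) : Y.time ∈ (∅ : Set ℤ))
    unfold schedCost
    calc ∑ X ∈ 𝒳, (2 : ℝ) ^ X.btype
        ≤ ∑ X ∈ 𝒳, ∑ Y ∈ S, ((sj X ∩ Y.bjobs).card : ℝ) * tupleWeight B X.btype := by
          refine Finset.sum_le_sum fun X hX => ?_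
          have hsub : sj X ⊆ S.biUnion fun Y => sj X ∩ Y.bjobs := by
            intro j hj
            obtain ⟨Y, hY, hjY⟩ := hcover j (hwin hX j hj).1
            exact Finset.mem_biUnion.mpr ⟨Y, hY, Finset.mem_inter.mpr ⟨hj, hjY⟩⟩
          have hle := (Finset.card_le_card hsub).trans Finset.card_biUnion_le
          rw [← tupleSize_mul_tupleWeight hB1, ← hcard' X hX, ← Finset.sum_mul]
          exact mul_le_mul_of_nonneg_right (by exact_mod_cast hle) (tupleWeight_nonneg _ _)
      _ = ∑ Y ∈ S, ∑ X ∈ 𝒳, ((sj X ∩ Y.bjobs).card : ℝ) * tupleWeight B X.btype :=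
          Finset.sum_comm
      _ ≤ ∑ Y ∈ S, (2 : ℝ) ^ Y.btype * 4 := by
          refine Finset.sum_le_sum fun Y hY => ?_
          rw [← Finset.sum_filter_add_sum_filter_not 𝒳 fun X => X.btype ≤ Y.btype]
          have hlow := sum_charge_low_le hB1 𝒳 Batch.btype sj hcard' Y.bjobs (hone Y hY) Y.btype
          have hhigh := sum_charge_high_le hB1 hcpj 𝒳 Batch.btype sj hdisj Y.bjobs Y.btype
            (hcap Y hY)
          rw [pow_succ] at hlow hhigh
          linarith
      _ = (∑ Y ∈ S, (2 : ℝ) ^ Y.btype) * 4 := (Finset.sum_mul _ _ _).symm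
  linarith
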